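/- For the shifted Gaussian f_{T,c}(x₁) = exp(πi x₁ᵗTx₁ + 2πi cᵗx₁) with c ∈ ℂⁿ, the L² inner product with its Heisenberg translate satisfies ⟨f_{T,c}, π_h f_{T,c}⟩ = (2ⁿ det(Im T))^{-1/2} · exp(−(π/2)H_c(h̲,h̲)), where H_c(h̲,h̲) = (h̲ − 2i Im c)ᵗ(Im T)^{-1}(h̲* − 2i Im c) + 4i h₁ᵗ(Re c). -/

import Mathlib

open Real Complex Matrix MeasureTheory

noncomputable section

def cvec {n : ℕ} (v : Fin n → ℝ) : Fin n → ℂ := fun i => (v i : ℂ)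

def uVec {n : ℕ} (T : Matrix (Fin n) (Fin n) ℂ) (h : (Fin n → ℝ) × (Fin n → ℝ)) :
    Fin n → ℂ :=
  T.mulVec (cvec h.1) + cvec h.2

def uVecStar {n : ℕ} (T : Matrix (Fin n) (Fin n) ℂ) (h : (Fin n → ℝ) × (Fin n → ℝ)) :
    Fin n → ℂ :=
  (T.map (starRingEnd ℂ)).mulVec (cvec h.1) + cvec h.2

/-- `H_c(h̲,h̲) = (h̲ − 2i Im c)ᵗ(Im T)⁻¹(h̲* − 2i Im c) + 4i h₁ᵗ(Re c)`. -/
def HcForm {n : ℕ} (T : Matrix (Fin n) (Fin n) ℂ) (c : Fin n → ℂ)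
    (h : (Fin n → ℝ) × (Fin n → ℝ)) : ℂ :=
  dotProduct (uVec T h - fun i => 2 * Complex.I * ((c i).im : ℂ))
      ((((T.map Complex.im)⁻¹).map (fun r => (r : ℂ))).mulVec
        (uVecStar T h - fun i => 2 * Complex.I * ((c i).im : ℂ))) +
    4 * Complex.I * dotProduct (cvec h.1) (fun i => ((c i).re : ℂ))

/-- The shifted Gaussian theta vector `f_{T,c}(x₁) = exp(πi x₁ᵗTx₁ + 2πi cᵗx₁)`. -/
def gaussianShift {n : ℕ} (T : Matrix (Fin n) (Fin n) ℂ) (c : Fin n → ℂ)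
    (x : Fin n → ℝ) : ℂ :=
  Complex.exp ((π : ℂ) * Complex.I * dotProduct (cvec x) (T.mulVec (cvec x)) +
    2 * (π : ℂ) * Complex.I * dotProduct c (cvec x))

/-- The Heisenberg representation. -/
def heisRep {n : ℕ} (y : (Fin n → ℝ) × (Fin n → ℝ)) (f : (Fin n → ℝ) → ℂ)
    (x₁ : Fin n → ℝ) : ℂ :=
  Complex.exp (2 * (π : ℂ) * Complex.I * dotProduct (cvec x₁) (cvec y.2) +
    (π : ℂ) * Complex.I * dotProduct (cvec y.1) (cvec y.2)) * f (x₁ + y.1)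

open scoped MatrixOrder in
theorem posDef_factor {n : ℕ} {B : Matrix (Fin n) (Fin n) ℝ} (hB : B.PosDef) :
    ∃ M : Matrix (Fin n) (Fin n) ℝ, M.det ≠ 0 ∧ B = Mᵀ * M := by
  obtain ⟨y, hy⟩ := CStarAlgebra.nonneg_iff_eq_star_mul_self.mp hB.posSemidef.nonneg
  have hy' : B = yᵀ * y := by
    rw [hy, star_eq_conjTranspose, conjTranspose_eq_transpose_of_trivial]
  refine ⟨y, ?_, hy'⟩
  intro h0
  have := hB.det_pos
  rw [hy', det_mul, h0] at this
  simp at this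

theorem map_ofReal_mul {n : ℕ} (A B : Matrix (Fin n) (Fin n) ℝ) :
    (A * B).map (fun r => (r : ℂ)) =
      A.map (fun r => (r : ℂ)) * B.map (fun r => (r : ℂ)) := by
  exact Matrix.map_mul (f := Complex.ofRealHom)

theorem map_ofReal_one {n : ℕ} :
    (1 : Matrix (Fin n) (Fin n) ℝ).map (fun r => (r : ℂ)) = 1 := by
  simp

theorem cvec_mulVec {n : ℕ} (M : Matrix (Fin n) (Fin n) ℝ) (x : Fin n → ℝ) :
    cvec (M *ᵥ x) = M.map (fun r => (r : ℂ)) *ᵥ cvec x := by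
  ext i
  simp [cvec, mulVec, dotProduct]

theorem gauss_const {n : ℕ} {M : Matrix (Fin n) (Fin n) ℝ} :
    ((|M.det⁻¹| : ℝ) : ℂ) * ((π : ℂ) / (2 * π : ℂ)) ^ ((Fintype.card (Fin n) : ℂ) / 2) =
      ((Real.sqrt (2 ^ n * (Mᵀ * M).det))⁻¹ : ℂ) := by
  have h1 : ((π : ℂ) / (2 * π : ℂ)) = ((2⁻¹ : ℝ) : ℂ) := by
    have : (π : ℂ) ≠ 0 := by exact_mod_cast Real.pi_ne_zero
    push_cast
    field_simp
  have h2 : ((Fintype.card (Fin n) : ℂ) / 2) = (((n : ℝ) / 2 : ℝ) : ℂ) := by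
    simp
  rw [h1, h2, ← Complex.ofReal_cpow (by norm_num), ← Complex.ofReal_mul, ← Complex.ofReal_inv]
  congr 1
  rw [det_mul, det_transpose, Real.sqrt_mul (by positivity), Real.sqrt_mul_self_eq_abs, abs_inv,
    mul_inv, mul_comm]
  congr 1
  rw [Real.inv_rpow (by norm_num)]
  congr 1
  rw [Real.sqrt_eq_rpow, ← Real.rpow_natCast, ← Real.rpow_mul (by norm_num)]
  congr 1
  ring

theorem gauss_aux {n : ℕ} {M : Matrix (Fin n) (Fin n) ℝ} (hM : M.det ≠ 0) (J : Fin n → ℂ) :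
    ∫ x : Fin n → ℝ, Complex.exp (-(2 * (π : ℂ)) *
        (cvec x ⬝ᵥ ((Mᵀ * M).map (fun r => (r : ℂ)) *ᵥ cvec x)) + J ⬝ᵥ cvec x) =
      ((Real.sqrt (2 ^ n * (Mᵀ * M).det))⁻¹ : ℂ) *
        Complex.exp ((J ⬝ᵥ (((Mᵀ * M)⁻¹).map (fun r => (r : ℂ)) *ᵥ J)) / (4 * (2 * π))) := by
  set N : Matrix (Fin n) (Fin n) ℂ := M.map (fun r => (r : ℂ)) with hN
  set P : Matrix (Fin n) (Fin n) ℂ := (M⁻¹).map (fun r => (r : ℂ)) with hP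
  have hu : IsUnit M.det := isUnit_iff_ne_zero.mpr hM
  have hPN : P * N = 1 := by
    rw [hP, hN, ← map_ofReal_mul, nonsing_inv_mul _ hu, map_ofReal_one]
  set k : Fin n → ℂ := Pᵀ *ᵥ J with hk
  have hmap : (Mᵀ * M).map (fun r => (r : ℂ)) = Nᵀ * N := by
    rw [map_ofReal_mul, hN, transpose_map]
  have hinv : ((Mᵀ * M)⁻¹).map (fun r => (r : ℂ)) = P * Pᵀ := by
    rw [Matrix.mul_inv_rev, map_ofReal_mul, hP, ← transpose_nonsing_inv, transpose_map]
  have key : ∀ x : Fin n → ℝ, Complex.exp (-(2 * (π : ℂ)) *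
        (cvec x ⬝ᵥ ((Mᵀ * M).map (fun r => (r : ℂ)) *ᵥ cvec x)) + J ⬝ᵥ cvec x) =
      (fun v : Fin n → ℝ => Complex.exp (-(2 * (π : ℂ)) * ∑ i, (v i : ℂ) ^ 2 +
        ∑ i, k i * v i)) (toLin' M x) := by
    intro x
    have e1 : cvec x ⬝ᵥ ((Mᵀ * M).map (fun r => (r : ℂ)) *ᵥ cvec x) =
        cvec (M *ᵥ x) ⬝ᵥ cvec (M *ᵥ x) := by
      rw [cvec_mulVec, ← hN, hmap, ← mulVec_mulVec, dotProduct_mulVec, vecMul_transpose]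
    have e2 : J ⬝ᵥ cvec x = k ⬝ᵥ cvec (M *ᵥ x) := by
      rw [cvec_mulVec, ← hN, hk, mulVec_transpose, ← dotProduct_mulVec, mulVec_mulVec, hPN,
        one_mulVec]
    rw [e1, e2]
    simp [dotProduct, cvec, pow_two]
  rw [integral_congr_ae (Filter.Eventually.of_forall key)]
  have hemb : MeasurableEmbedding (toLin' M) := by
    have : (toLin' M : (Fin n → ℝ) → (Fin n → ℝ)) =
        (LinearEquiv.ofIsUnitDet (f := toLin' M) (v := Pi.basisFun ℝ (Fin n))
          (v' := Pi.basisFun ℝ (Fin n)) (by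
            rw [← LinearMap.toMatrix'_toLin' M] at hu
            exact hu)).toContinuousLinearEquiv.toHomeomorph := by
      ext; rfl
    rw [this]
    exact Homeomorph.measurableEmbedding _
  rw [← hemb.integral_map (fun v : Fin n → ℝ => Complex.exp (-(2 * (π : ℂ)) * ∑ i, (v i : ℂ) ^ 2 +
        ∑ i, k i * v i)), Real.map_matrix_volume_pi_eq_smul_volume_pi hM,
    integral_smul_measure, GaussianFourier.integral_cexp_neg_mul_sum_add
      (by simp [Real.pi_pos]) k, ENNReal.toReal_ofReal (abs_nonneg _), ← gauss_const,
    Complex.real_smul, mul_assoc]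
  congr 4
  rw [hinv, ← mulVec_mulVec, dotProduct_mulVec, ← mulVec_transpose, ← hk]
  simp [dotProduct, pow_two]

/-- `⟨f_{T,c}, π_h f_{T,c}⟩ = (2ⁿ det(Im T))^{-1/2} · exp(−(π/2) H_c(h̲,h̲))`. -/
theorem gaussianShift_inner_heisRep {n : ℕ} (T : Matrix (Fin n) (Fin n) ℂ)
    (hsymm : T.IsSymm) (hpos : (T.map Complex.im).PosDef)
    (c : Fin n → ℂ) (h : (Fin n → ℝ) × (Fin n → ℝ)) :
    ∫ x : Fin n → ℝ,
        gaussianShift T c x * (starRingEnd ℂ) (heisRep h (gaussianShift T c) x) =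
      ((Real.sqrt (2 ^ n * (T.map Complex.im).det))⁻¹ : ℂ) *
        Complex.exp (-((π : ℂ) / 2) * HcForm T c h) := by
  obtain ⟨M, hM, hB⟩ := posDef_factor hpos
  set B : Matrix (Fin n) (Fin n) ℝ := T.map Complex.im with hBdef
  set Bc : Matrix (Fin n) (Fin n) ℂ := B.map (fun r => (r : ℂ)) with hBc
  set Bi : Matrix (Fin n) (Fin n) ℂ := (B⁻¹).map (fun r => (r : ℂ)) with hBi
  set S : Matrix (Fin n) (Fin n) ℂ := T.map (starRingEnd ℂ) with hS
  set m : Fin n → ℂ := fun i => 2 * Complex.I * ((c i).im : ℂ) with hm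
  set w : Fin n → ℂ := uVecStar T h - m with hw
  have hBu : IsUnit B.det := isUnit_iff_ne_zero.mpr hpos.det_pos.ne'
  have hBBi : Bc * Bi = 1 := by
    rw [hBc, hBi, ← map_ofReal_mul, mul_nonsing_inv _ hBu, map_ofReal_one]
  have hTS : T = S + (2 * Complex.I) • Bc := by
    ext i j
    apply Complex.ext <;> simp [hS, hBc, hBdef] <;> ring
  have hSsymm : Sᵀ = S := by
    rw [hS, ← transpose_map, hsymm.eq]
  have hBsymm : Bcᵀ = Bc := by
    rw [hBc, hBdef, ← transpose_map, ← transpose_map, hsymm.eq]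
  have g := gauss_aux hM ((-(2 * (π : ℂ) * Complex.I)) • w)
  rw [← hB, ← hBc, ← hBi] at g
  set a := cvec h.1 with ha
  set b := cvec h.2 with hb
  set cb : Fin n → ℂ := fun i => starRingEnd ℂ (c i) with hcb
  have hc : c = cb + m := by
    ext i
    apply Complex.ext <;> simp [hcb, hm] <;> ring
  have hre : (fun i => ((c i).re : ℂ)) = cb + (1 / 2 : ℂ) • m := by
    ext i
    apply Complex.ext <;> simp [hcb, hm]
  have hwe : w = S *ᵥ a + b - m := rfl
  have hu : uVec T h - m = w + (2 * Complex.I) • (Bc *ᵥ a) := by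
    rw [hwe]
    change T *ᵥ a + b - m = _
    conv_lhs => rw [hTS]
    rw [add_mulVec, smul_mulVec]
    abel
  have hconst : ∀ x : Fin n → ℝ,
      gaussianShift T c x * (starRingEnd ℂ) (heisRep h (gaussianShift T c) x) =
      Complex.exp (-(π * Complex.I) * (a ⬝ᵥ (S *ᵥ a) + a ⬝ᵥ b + 2 * (cb ⬝ᵥ a))) *
      Complex.exp (-(2 * (π : ℂ)) * (cvec x ⬝ᵥ (Bc *ᵥ cvec x)) +
        ((-(2 * (π : ℂ) * Complex.I)) • w) ⬝ᵥ cvec x) := by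
    intro x
    have hconj : (starRingEnd ℂ) (heisRep h (gaussianShift T c) x) =
        Complex.exp (-(2 * (π : ℂ) * Complex.I * (cvec x ⬝ᵥ b) + π * Complex.I * (a ⬝ᵥ b))) *
        Complex.exp (-(π * Complex.I * ((cvec x + a) ⬝ᵥ (S *ᵥ (cvec x + a))) +
          2 * π * Complex.I * (cb ⬝ᵥ (cvec x + a)))) := by
      simp only [heisRep, gaussianShift, map_mul, ← Complex.exp_conj, map_add, Complex.conj_I,
        Complex.conj_ofReal, dotProduct, mulVec, map_sum, cvec, ha, hb, hS, hcb, Pi.add_apply,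
        Matrix.map_apply, Complex.ofReal_add, map_ofNat]
      congr 2 <;> ring
    rw [hconj]
    unfold gaussianShift
    rw [← Complex.exp_add, ← Complex.exp_add, ← Complex.exp_add]
    congr 1
    have hax : a ⬝ᵥ (S *ᵥ cvec x) = (S *ᵥ a) ⬝ᵥ cvec x := by
      rw [dotProduct_mulVec, ← mulVec_transpose, hSsymm]
    have hxa : cvec x ⬝ᵥ (S *ᵥ a) = (S *ᵥ a) ⬝ᵥ cvec x := dotProduct_comm _ _
    have hxb : cvec x ⬝ᵥ b = b ⬝ᵥ cvec x := dotProduct_comm _ _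
    have hTx : cvec x ⬝ᵥ (T *ᵥ cvec x) = cvec x ⬝ᵥ (S *ᵥ cvec x) +
        2 * Complex.I * (cvec x ⬝ᵥ (Bc *ᵥ cvec x)) := by
      conv_lhs => rw [hTS]
      rw [add_mulVec, smul_mulVec, dotProduct_add, dotProduct_smul, smul_eq_mul]
    have hcx : c ⬝ᵥ cvec x = cb ⬝ᵥ cvec x + m ⬝ᵥ cvec x := by
      conv_lhs => rw [hc]
      rw [add_dotProduct]
    rw [hTx, hcx, hwe]
    simp only [mulVec_add, dotProduct_add, add_dotProduct, smul_dotProduct, sub_dotProduct,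
      smul_eq_mul, hax, hxa, hxb]
    linear_combination (2 * π * (cvec x ⬝ᵥ (Bc *ᵥ cvec x))) * Complex.I_sq
  simp_rw [hconst]
  rw [integral_const_mul, g, mul_left_comm, ← Complex.exp_add]
  congr 2
  have hH : HcForm T c h = w ⬝ᵥ (Bi *ᵥ w) + 2 * Complex.I * (a ⬝ᵥ w) +
      4 * Complex.I * (a ⬝ᵥ (cb + (1 / 2 : ℂ) • m)) := by
    have : (Bc *ᵥ a) ⬝ᵥ (Bi *ᵥ w) = a ⬝ᵥ w := by
      rw [← vecMul_transpose, hBsymm, ← dotProduct_mulVec, mulVec_mulVec, hBBi, one_mulVec]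
    rw [← hre]
    change (uVec T h - m) ⬝ᵥ (Bi *ᵥ w) + _ = _
    rw [hu, add_dotProduct, smul_dotProduct, this, smul_eq_mul]
  rw [hH]
  have hpi : (π : ℂ) ≠ 0 := by exact_mod_cast Real.pi_ne_zero
  have e3 : (-(2 * (π : ℂ) * Complex.I)) • w ⬝ᵥ (Bi *ᵥ ((-(2 * (π : ℂ) * Complex.I)) • w)) /
      (4 * (2 * π)) = -(π / 2) * (w ⬝ᵥ (Bi *ᵥ w)) := by
    rw [mulVec_smul, smul_dotProduct, dotProduct_smul, smul_eq_mul, smul_eq_mul]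
    field_simp
    linear_combination (4 * (w ⬝ᵥ (Bi *ᵥ w))) * Complex.I_sq
  rw [e3, hwe]
  simp only [dotProduct_add, dotProduct_sub, dotProduct_smul, smul_eq_mul, dotProduct_comm cb a]
  ring

end
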